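/- arXiv:2508.07936 — 2 statements merged into one kernel-verified Lean document; each statement's English description precedes it below -/
import Mathlib

section
/- For μ-almost every ω, as n → ∞: (1/n) Σ_{k=0}^{n−1} Y_k(ω)² → θ²h² + σ²h + γ²h^{2H}; (1/n) Σ_{k=0}^{n−1} Y_k(ω) Y_{k+1}(ω) → θ²h² + γ²h^{2H}(2^{2H−1} − 1); and (1/n) Σ_{k=0}^{n−1} (Y_k(ω) + Y_{k+1}(ω))(Y_{k+2}(ω) + Y_{k+3}(ω)) → 4θ²h² + γ²h^{2H}·2^{2H}(2^{2H−1} − 1). -/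
open MeasureTheory Filter Set Finset

noncomputable def rhoH (H : ℝ) (k : ℤ) : ℝ :=
  (|(k : ℝ) + 1| ^ (2 * H) + |(k : ℝ) - 1| ^ (2 * H) - 2 * |(k : ℝ)| ^ (2 * H)) / 2

noncomputable def mixedCov (σ γ h H : ℝ) (k : ℤ) : ℝ :=
  σ ^ 2 * h * (if k = 0 then 1 else 0) + γ ^ 2 * h ^ (2 * H) * rhoH H k

def shift : (ℕ → ℝ) → (ℕ → ℝ) := fun ω k => ω (k + 1)

set_option linter.unusedSectionVars false

lemma gauss_moments (m : ℝ) (v : NNReal) :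
    (∫ x, x ^ 2 ∂(ProbabilityTheory.gaussianReal m v) = m ^ 2 + v) ∧
    (∫ x, x ^ 4 ∂(ProbabilityTheory.gaussianReal m v) = m ^ 4 + 6 * m ^ 2 * v + 3 * v ^ 2) := by
  have h0 : (0:ℝ) ∈ interior (ProbabilityTheory.integrableExpSet id
      (ProbabilityTheory.gaussianReal m v)) := by
    rw [ProbabilityTheory.integrableExpSet_id_gaussianReal]; simp
  have e (n : ℕ) := ProbabilityTheory.iteratedDeriv_mgf_zero h0 n
  rw [ProbabilityTheory.mgf_id_gaussianReal] at e
  have hE : ∀ t : ℝ, HasDerivAt (fun t : ℝ => Real.exp (m * t + v * t ^ 2 / 2))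
      ((m + v * t) * Real.exp (m * t + v * t ^ 2 / 2)) t := by
    intro t
    have : HasDerivAt (fun t : ℝ => m * t + v * t ^ 2 / 2) (m + v * t) t := by
      have h1 := (hasDerivAt_id t).const_mul m
      have h2 := (((hasDerivAt_id t).pow 2).const_mul (v:ℝ)).div_const 2
      convert! h1.add h2 using 1
      simp; ring
    convert! this.exp using 1
    ring
  have hL : ∀ t : ℝ, HasDerivAt (fun t : ℝ => m + v * t) (v:ℝ) t := by
    intro t
    simpa using ((hasDerivAt_id t).const_mul (v:ℝ)).const_add m
  have d1 : deriv (fun t : ℝ => Real.exp (m * t + v * t ^ 2 / 2)) =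
      fun t => (m + v * t) * Real.exp (m * t + v * t ^ 2 / 2) := funext fun t => (hE t).deriv
  have d2 : deriv (fun t : ℝ => (m + v * t) * Real.exp (m * t + v * t ^ 2 / 2)) =
      fun t => ((m + v * t) ^ 2 + v) * Real.exp (m * t + v * t ^ 2 / 2) := by
    funext t
    refine (((hL t).mul (hE t)).deriv).trans ?_; ring
  have d3 : deriv (fun t : ℝ => ((m + v * t) ^ 2 + v) * Real.exp (m * t + v * t ^ 2 / 2)) =
      fun t => ((m + v * t) ^ 3 + 3 * v * (m + v * t)) * Real.exp (m * t + v * t ^ 2 / 2) := by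
    funext t
    refine (((((hL t).pow 2).add_const (v:ℝ)).mul (hE t)).deriv).trans ?_; simp; ring
  have d4 : deriv (fun t : ℝ => ((m + v * t) ^ 3 + 3 * v * (m + v * t)) *
        Real.exp (m * t + v * t ^ 2 / 2)) =
      fun t => ((m + v * t) ^ 4 + 6 * v * (m + v * t) ^ 2 + 3 * v ^ 2) *
        Real.exp (m * t + v * t ^ 2 / 2) := by
    funext t
    refine (((((hL t).pow 3).add ((hL t).const_mul (3 * (v:ℝ)))).mul (hE t)).deriv).trans ?_; simp; ring
  constructor
  · have := e 2
    simp only [iteratedDeriv_succ, iteratedDeriv_zero, d1, d2] at this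
    simp at this
    linarith
  · have := e 4
    simp only [iteratedDeriv_succ, iteratedDeriv_zero, d1, d2, d3, d4] at this
    simp at this
    linarith

/-- Law of large numbers for nonnegative variables with polynomially controlled variance. -/
lemma lln_nonneg {Ω : Type*} [MeasurableSpace Ω] (μ : Measure Ω) [IsProbabilityMeasure μ]
    (Z : ℕ → Ω → ℝ) (hZ : ∀ k ω, 0 ≤ Z k ω) (M C p : ℝ) (hp : p < 2)
    (hint : ∀ n : ℕ, Integrable (fun ω => (∑ k ∈ range n, Z k ω - n * M) ^ 2) μ)
    (hC : ∀ n : ℕ, 1 ≤ n → ∫ ω, (∑ k ∈ range n, Z k ω - n * M) ^ 2 ∂μ ≤ C * (n : ℝ) ^ p) :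
    ∀ᵐ ω ∂μ, Tendsto (fun n : ℕ => (1 / (n : ℝ)) * ∑ k ∈ range n, Z k ω) atTop (nhds M) := by
  have hC0 : 0 ≤ C := by
    have := hC 1 le_rfl
    simp at this
    exact (integral_nonneg fun ω => sq_nonneg _).trans this
  have key : ∀ c : ℝ, 1 < c → ∀ᵐ ω ∂μ, Tendsto (fun i : ℕ =>
      (∑ k ∈ range ⌊c ^ i⌋₊, Z k ω) / (⌊c ^ i⌋₊ : ℝ)) atTop (nhds M) := by
    intro c hc
    set N : ℕ → ℕ := fun i => ⌊c ^ i⌋₊ with hN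
    have hN1 : ∀ i, 1 ≤ N i := fun i => by
      rw [hN]; simp only [Nat.one_le_floor_iff]; exact one_le_pow₀ hc.le
    have hN2 : ∀ i, c ^ i / 2 ≤ (N i : ℝ) := fun i => by
      have h1 : c ^ i < (N i : ℝ) + 1 := Nat.lt_floor_add_one _
      have h2 : (1:ℝ) ≤ N i := by exact_mod_cast hN1 i
      linarith
    set F : ℕ → Ω → ℝ := fun i ω => ((∑ k ∈ range (N i), Z k ω - N i * M) / N i) ^ 2 with hF
    have hF0 : ∀ i ω, 0 ≤ F i ω := fun i ω => sq_nonneg _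
    have hFi : ∀ i, Integrable (F i) μ := fun i => by
      simp only [hF, div_pow]; exact (hint (N i)).div_const _
    have hFb : ∀ i, ∫ ω, F i ω ∂μ ≤ C * 2 ^ (2 - p) * (c ^ (p - 2)) ^ i := fun i => by
      simp only [hF, div_pow]
      rw [integral_div]
      have hpos : (0:ℝ) < N i := by exact_mod_cast hN1 i
      have hcpos : 0 < c := by linarith
      calc _ ≤ C * (N i : ℝ) ^ p / (N i : ℝ) ^ 2 := by gcongr; exact hC _ (hN1 i)
        _ = C * (N i : ℝ) ^ (p - 2) := by
          rw [Real.rpow_sub hpos, Real.rpow_two]; ring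
        _ ≤ C * (c ^ i / 2) ^ (p - 2) := by
          exact mul_le_mul_of_nonneg_left
            (Real.rpow_le_rpow_of_nonpos (by positivity) (hN2 i) (by linarith)) hC0
        _ = _ := by
          rw [Real.div_rpow (by positivity) (by norm_num), ← Real.rpow_natCast,
            ← Real.rpow_natCast, ← Real.rpow_mul hcpos.le, ← Real.rpow_mul hcpos.le,
            show (2 - p) = -(p - 2) by ring, Real.rpow_neg (by norm_num : (0:ℝ) ≤ 2), mul_comm (i:ℝ)]
          ring
    have hsum : Summable fun i => ∫ ω, F i ω ∂μ := by
      refine Summable.of_nonneg_of_le (fun i => integral_nonneg (hF0 i)) hFb ?_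
      apply Summable.mul_left
      apply summable_geometric_of_lt_one (by positivity)
      exact Real.rpow_lt_one_of_one_lt_of_neg hc (by linarith)
    have hl : ∫⁻ ω, ∑' i, ENNReal.ofReal (F i ω) ∂μ ≠ ⊤ := by
      rw [lintegral_tsum fun i => (hFi i).aestronglyMeasurable.aemeasurable.ennreal_ofReal]
      have : ∀ i, ∫⁻ ω, ENNReal.ofReal (F i ω) ∂μ = ENNReal.ofReal (∫ ω, F i ω ∂μ) := fun i =>
        (ofReal_integral_eq_lintegral_ofReal (hFi i) (ae_of_all _ (hF0 i))).symm
      simp_rw [this]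
      exact hsum.tsum_ofReal_ne_top
    have hae := ae_lt_top' (AEMeasurable.tsum
      fun i => (hFi i).aestronglyMeasurable.aemeasurable.ennreal_ofReal) hl
    filter_upwards [hae] with ω hω
    have h1 := ENNReal.tendsto_atTop_zero_of_tsum_ne_top hω.ne
    have h2 := (ENNReal.tendsto_toReal ENNReal.zero_ne_top).comp h1
    have h3 : Tendsto (fun i => F i ω) atTop (nhds 0) := by
      refine (h2.congr fun i => ?_)
      simp [hF0 i ω]
    have h4 : Tendsto (fun i => (∑ k ∈ range (N i), Z k ω - N i * M) / N i) atTop (nhds 0) := by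
      have := (Real.continuous_sqrt.tendsto 0).comp h3
      rw [Real.sqrt_zero] at this
      apply (tendsto_zero_iff_abs_tendsto_zero _).2
      refine this.congr fun i => ?_
      simp [hF, Real.sqrt_sq_eq_abs]
    have h5 := h4.add_const M
    rw [zero_add] at h5
    refine h5.congr fun i => ?_
    have hpos : (0:ℝ) < N i := by exact_mod_cast hN1 i
    change _ = (∑ k ∈ range (N i), Z k ω) / (N i : ℝ)
    field_simp
    ring
  have hall : ∀ᵐ ω ∂μ, ∀ j : ℕ, Tendsto (fun i : ℕ =>
      (∑ k ∈ range ⌊(1 + 1 / ((j:ℝ) + 1)) ^ i⌋₊, Z k ω) / (⌊(1 + 1 / ((j:ℝ) + 1)) ^ i⌋₊ : ℝ))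
        atTop (nhds M) :=
    ae_all_iff.2 fun j => key _ (by have : 0 < 1 / ((j:ℝ) + 1) := by positivity
                                    linarith)
  filter_upwards [hall] with ω hω
  have := tendsto_div_of_monotone_of_tendsto_div_floor_pow (fun n => ∑ k ∈ range n, Z k ω) M
    (fun a b hab => sum_le_sum_of_subset_of_nonneg (range_mono hab) fun i _ _ => hZ i ω)
    (fun j => 1 + 1 / ((j:ℝ) + 1)) (fun j => by
      have : 0 < 1 / ((j:ℝ) + 1) := by positivity
      linarith)
    (by simpa using tendsto_one_div_add_atTop_nhds_zero_nat.const_add (1:ℝ)) hω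
  refine this.congr fun n => by ring

lemma rhoH_nonneg {H : ℝ} (hH : 1 / 2 < H) (k : ℤ) : 0 ≤ rhoH H k := by
  unfold rhoH
  set x : ℝ := (k : ℝ)
  have h1 : |x| ≤ (1/2 : ℝ) * |x + 1| + (1/2 : ℝ) * |x - 1| := by
    have := abs_add_le (x + 1) (x - 1)
    rw [show x + 1 + (x - 1) = 2 * x by ring, abs_mul, abs_two] at this
    linarith
  have h2 := (convexOn_rpow (by linarith : 1 ≤ 2 * H)).2 (abs_nonneg (x + 1) : |x+1| ∈ Set.Ici (0:ℝ))
    (abs_nonneg (x - 1) : |x-1| ∈ Set.Ici (0:ℝ)) (by norm_num : (0:ℝ) ≤ 1/2) (by norm_num : (0:ℝ) ≤ 1/2) (by norm_num)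
  simp only [smul_eq_mul] at h2
  have h3 : |x| ^ (2 * H) ≤ ((1/2 : ℝ) * |x + 1| + (1/2 : ℝ) * |x - 1|) ^ (2 * H) :=
    Real.rpow_le_rpow (abs_nonneg _) h1 (by linarith)
  linarith

lemma rhoH_even (H : ℝ) (k : ℤ) : rhoH H (-k) = rhoH H k := by
  unfold rhoH
  push_cast
  rw [abs_neg, show (-(k:ℝ) + 1) = -((k:ℝ) - 1) by ring, show (-(k:ℝ) - 1) = -((k:ℝ) + 1) by ring,
    abs_neg, abs_neg]
  ring

lemma rhoH_zero {H : ℝ} (hH : 1 / 2 < H) : rhoH H 0 = 1 := by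
  unfold rhoH
  have : 2 * H ≠ 0 := by linarith
  simp [Real.zero_rpow this]

lemma rhoH_sum_one {H : ℝ} (hH : 1 / 2 < H) (n : ℕ) :
    2 * ∑ j ∈ range n, rhoH H ((n : ℤ) - (j : ℤ)) + 1 = ((n : ℝ) + 1) ^ (2 * H) - (n : ℝ) ^ (2 * H) := by
  have h0 : ∑ j ∈ range n, rhoH H ((n : ℤ) - (j : ℤ)) = ∑ j ∈ range n, rhoH H ((j : ℤ) + 1) := by
    rw [← sum_range_reflect]
    refine sum_congr rfl fun j hj => ?_
    rw [Finset.mem_range] at hj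
    congr 1
    omega
  rw [h0]
  clear h0
  induction n with
  | zero => simp [Real.zero_rpow (by linarith : 2 * H ≠ 0)]
  | succ n ih =>
    rw [sum_range_succ, mul_add]
    have : 2 * rhoH H ((n : ℤ) + 1) = ((n : ℝ) + 1 + 1) ^ (2 * H) + (n : ℝ) ^ (2 * H)
        - 2 * ((n : ℝ) + 1) ^ (2 * H) := by
      unfold rhoH
      push_cast
      rw [abs_of_nonneg (by positivity), abs_of_nonneg (by simp),
        abs_of_nonneg (by positivity)]
      simp only [add_sub_cancel_right]
      ring
    rw [this]
    push_cast
    linarith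

lemma rhoH_sum {H : ℝ} (hH : 1 / 2 < H) (n : ℕ) :
    ∑ i ∈ range n, ∑ j ∈ range n, rhoH H ((i : ℤ) - (j : ℤ)) = (n : ℝ) ^ (2 * H) := by
  induction n with
  | zero => simp [Real.zero_rpow (by linarith : 2 * H ≠ 0)]
  | succ n ih =>
    rw [sum_range_succ]
    simp_rw [sum_range_succ (fun j : ℕ => rhoH H ((_ : ℤ) - (j : ℤ)))]
    rw [sum_add_distrib, ih, sub_self, rhoH_zero hH]
    have : ∑ i ∈ range n, rhoH H ((i : ℤ) - (n : ℤ)) = ∑ i ∈ range n, rhoH H ((n : ℤ) - (i : ℤ)) :=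
      sum_congr rfl fun i _ => by rw [← rhoH_even, neg_sub]
    rw [this]
    have := rhoH_sum_one hH n
    push_cast
    linarith

lemma mixedCov_nonneg {σ γ h H : ℝ} (hh : 0 < h) (hH : 1 / 2 < H) (k : ℤ) :
    0 ≤ mixedCov σ γ h H k := by
  unfold mixedCov
  have := rhoH_nonneg hH k
  split_ifs <;> positivity

lemma mixedCov_sum {σ γ h H : ℝ} (hH : 1 / 2 < H) (n : ℕ) :
    ∑ i ∈ range n, ∑ j ∈ range n, mixedCov σ γ h H ((i : ℤ) - (j : ℤ)) =
      σ ^ 2 * h * n + γ ^ 2 * h ^ (2 * H) * (n : ℝ) ^ (2 * H) := by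
  unfold mixedCov
  simp_rw [sum_add_distrib, ← mul_sum, rhoH_sum hH]
  congr 2
  have : ∀ i ∈ range n, ∑ j ∈ range n, (if (i : ℤ) - (j : ℤ) = 0 then (1 : ℝ) else 0) = 1 := by
    intro i hi
    simp_rw [sub_eq_zero, Nat.cast_inj]
    rw [Finset.sum_ite_eq]
    simp [Finset.mem_range.1 hi]
  rw [sum_congr rfl this]
  simp

lemma mixedCov_even (σ γ h H : ℝ) (k : ℤ) : mixedCov σ γ h H (-k) = mixedCov σ γ h H k := by
  unfold mixedCov
  rw [rhoH_even]; simp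

lemma mixedCov_sum_shift {σ γ h H : ℝ} (hh : 0 < h) (hH : 1 / 2 < H) (n l l' : ℕ)
    (hl : l < 4) (hl' : l' < 4) (hn : 1 ≤ n) :
    ∑ i ∈ range n, ∑ j ∈ range n, mixedCov σ γ h H (((i + l : ℕ) : ℤ) - ((j + l' : ℕ) : ℤ)) ≤
      (σ ^ 2 * h + γ ^ 2 * h ^ (2 * H)) * 5 ^ (2 * H) * (n : ℝ) ^ (2 * H) := by
  have hn' : (1:ℝ) ≤ n := by exact_mod_cast hn
  have h1 : ∀ (f : ℕ → ℝ) (l : ℕ), l < 4 → (∀ i, 0 ≤ f i) →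
      ∑ i ∈ range n, f (i + l) ≤ ∑ i ∈ range (n + 4), f i := by
    intro f l hl hf
    have hm := sum_map (range n) (addRightEmbedding l) f
    simp only [addRightEmbedding_apply] at hm
    rw [← hm]
    apply sum_le_sum_of_subset_of_nonneg
    · intro x hx
      simp only [Finset.mem_map, Finset.mem_range, addRightEmbedding_apply] at hx ⊢
      omega
    · intros; exact hf _
  calc _ ≤ ∑ i ∈ range n, ∑ j ∈ range (n + 4), mixedCov σ γ h H (((i + l : ℕ) : ℤ) - (j : ℤ)) :=
        sum_le_sum fun i _ => h1 (fun j => mixedCov σ γ h H (((i + l : ℕ) : ℤ) - (j : ℤ))) l' hl'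
          fun j => mixedCov_nonneg hh hH _
    _ ≤ ∑ i ∈ range (n + 4), ∑ j ∈ range (n + 4), mixedCov σ γ h H ((i : ℤ) - (j : ℤ)) :=
        h1 (fun i => ∑ j ∈ range (n + 4), mixedCov σ γ h H ((i : ℤ) - (j : ℤ))) l hl
          fun j => sum_nonneg fun _ _ => mixedCov_nonneg hh hH _
    _ = σ ^ 2 * h * (n + 4 : ℕ) + γ ^ 2 * h ^ (2 * H) * ((n + 4 : ℕ) : ℝ) ^ (2 * H) :=
        mixedCov_sum hH _
    _ ≤ σ ^ 2 * h * ((n + 4 : ℕ) : ℝ) ^ (2 * H) +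
          γ ^ 2 * h ^ (2 * H) * ((n + 4 : ℕ) : ℝ) ^ (2 * H) := by
        gcongr
        apply Real.self_le_rpow_of_one_le _ (by linarith)
        push_cast; linarith
    _ = (σ ^ 2 * h + γ ^ 2 * h ^ (2 * H)) * ((n + 4 : ℕ) : ℝ) ^ (2 * H) := by ring
    _ ≤ (σ ^ 2 * h + γ ^ 2 * h ^ (2 * H)) * (5 * (n : ℝ)) ^ (2 * H) := by
        gcongr
        push_cast; linarith
    _ = _ := by rw [Real.mul_rpow (by norm_num) (by linarith)]; ring

section gen
variable {Ω : Type*} [MeasurableSpace Ω] {μ : Measure Ω} [IsProbabilityMeasure μ]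

lemma gl_map {X : Ω → ℝ} {v : NNReal} (hX : Measurable X)
    (h : μ.map X = ProbabilityTheory.gaussianReal 0 v) (m : ℝ) :
    μ.map (fun ω => m + X ω) = ProbabilityTheory.gaussianReal m v := by
  have := ProbabilityTheory.gaussianReal_map_const_add (μ := 0) (v := v) m
  rw [zero_add, ← h, Measure.map_map (by fun_prop) hX] at this
  exact this

lemma gl_int {X : Ω → ℝ} {v : NNReal} (hX : Measurable X)
    (h : μ.map X = ProbabilityTheory.gaussianReal 0 v) (m : ℝ) (n : ℕ) :
    Integrable (fun ω => (m + X ω) ^ n) μ := by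
  have h1 := gl_map hX h m
  have h2 := ProbabilityTheory.memLp_id_gaussianReal (μ := m) (v := v) n
  have h3 : Integrable (fun x : ℝ => x ^ n) (ProbabilityTheory.gaussianReal m v) := by
    rw [← integrable_norm_iff (by fun_prop)]
    simpa using (MemLp.integrable_norm_pow' (f := (id : ℝ → ℝ)) (p := n) (by simpa using h2))
  rw [← h1] at h3
  exact h3.comp_measurable (by fun_prop)

lemma gl_mom {X : Ω → ℝ} {v : NNReal} (hX : Measurable X)
    (h : μ.map X = ProbabilityTheory.gaussianReal 0 v) (m : ℝ) :
    ∫ ω, (m + X ω) ^ 2 ∂μ = m ^ 2 + ∫ ω, X ω ^ 2 ∂μ ∧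
    ∫ ω, (m + X ω) ^ 4 ∂μ = m ^ 4 + 6 * m ^ 2 * (∫ ω, X ω ^ 2 ∂μ) + 3 * (∫ ω, X ω ^ 2 ∂μ) ^ 2 := by
  have h0 : ∫ ω, X ω ^ 2 ∂μ = v := by
    have := (gauss_moments 0 v).1
    rw [← h, integral_map (by fun_prop) (by fun_prop)] at this
    simpa using this
  have h1 := gauss_moments m v
  rw [← gl_map hX h m, integral_map (by fun_prop) (by fun_prop),
    integral_map (by fun_prop) (by fun_prop)] at h1
  rw [h0]; exact h1

/-- A linear space of centered Gaussian variables. -/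
def GaussSp (μ : Measure Ω) (V : Submodule ℝ (Ω → ℝ)) : Prop :=
  ∀ X ∈ V, Measurable X ∧ ∃ v : NNReal, μ.map X = ProbabilityTheory.gaussianReal 0 v

variable {V : Submodule ℝ (Ω → ℝ)}

lemma GaussSp.int (hV : GaussSp μ V) {X : Ω → ℝ} (hX : X ∈ V) (m : ℝ) (n : ℕ) :
    Integrable (fun ω => (m + X ω) ^ n) μ := by
  obtain ⟨h, v, hv⟩ := hV X hX
  exact gl_int h hv m n

lemma GaussSp.int_sq (hV : GaussSp μ V) {X : Ω → ℝ} (hX : X ∈ V) :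
    Integrable (fun ω => (X ω) ^ 2) μ := by
  simpa using hV.int hX 0 2

lemma GaussSp.int_mul (hV : GaussSp μ V) {X Y : Ω → ℝ} (hX : X ∈ V) (hY : Y ∈ V) :
    Integrable (fun ω => X ω * Y ω) μ := by
  have h := ((hV.int_sq (V.add_mem hX hY)).sub (hV.int_sq (V.sub_mem hX hY))).div_const 4
  refine h.congr (ae_of_all _ fun ω => ?_)
  simp; ring

lemma GaussSp.mom_add (hV : GaussSp μ V) {X Y : Ω → ℝ} (hX : X ∈ V) (hY : Y ∈ V) (s : ℝ) :
    ∫ ω, (X ω + s * Y ω) ^ 2 ∂μ =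
      ∫ ω, X ω ^ 2 ∂μ + s ^ 2 * (∫ ω, Y ω ^ 2 ∂μ) + 2 * s * ∫ ω, X ω * Y ω ∂μ := by
  have h1 := hV.int_sq hX
  have h2 := (hV.int_sq hY).const_mul (s ^ 2)
  have h3 := (hV.int_mul hX hY).const_mul (2 * s)
  rw [← integral_const_mul, ← integral_const_mul, ← integral_add h1 h2,
    ← integral_add (h1.fun_add h2) h3]
  congr 1; funext ω; ring

lemma GaussSp.prod (hV : GaussSp μ V) {X Y : Ω → ℝ} (hX : X ∈ V) (hY : Y ∈ V) (m : ℝ) :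
    Integrable (fun ω => (m + X ω) ^ 2 * (m + Y ω) ^ 2) μ ∧
    ∫ ω, (m + X ω) ^ 2 * (m + Y ω) ^ 2 ∂μ =
      (m ^ 2 + ∫ ω, X ω ^ 2 ∂μ) * (m ^ 2 + ∫ ω, Y ω ^ 2 ∂μ) +
        4 * m ^ 2 * (∫ ω, X ω * Y ω ∂μ) + 2 * (∫ ω, X ω * Y ω ∂μ) ^ 2 := by
  have hs := V.add_mem hX hY
  have hd := V.sub_mem hX hY
  have i1 := hV.int hs (2 * m) 4
  have i2 := hV.int hd 0 4
  have i3 := (hV.int hX m 4).const_mul 2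
  have i4 := (hV.int hY m 4).const_mul 2
  have i5 := i1.fun_add i2
  have i6 : Integrable (fun ω => (2 * m + (X + Y) ω) ^ 4 + (0 + (X - Y) ω) ^ 4 - 2 * (m + X ω) ^ 4) μ :=
    i5.sub i3
  have i7 := i6.sub i4
  have e : (fun ω => (m + X ω) ^ 2 * (m + Y ω) ^ 2) = fun ω =>
     (((2 * m + (X + Y) ω) ^ 4 + (0 + (X - Y) ω) ^ 4) - 2 * (m + X ω) ^ 4 - 2 * (m + Y ω) ^ 4) / 12 := by
    funext ω; simp; ring
  rw [e]
  refine ⟨i7.div_const 12, ?_⟩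
  have mm : ∀ {W : Ω → ℝ}, W ∈ V → ∀ m : ℝ, ∫ ω, (m + W ω) ^ 4 ∂μ = m ^ 4 +
      6 * m ^ 2 * (∫ ω, W ω ^ 2 ∂μ) + 3 * (∫ ω, W ω ^ 2 ∂μ) ^ 2 := by
    intro W hW m
    obtain ⟨h, v, hv⟩ := hV W hW
    exact (gl_mom h hv m).2
  have a1 : ∫ ω, (X + Y) ω ^ 2 ∂μ =
      ∫ ω, X ω ^ 2 ∂μ + ∫ ω, Y ω ^ 2 ∂μ + 2 * ∫ ω, X ω * Y ω ∂μ := by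
    have := hV.mom_add hX hY 1
    simp only [one_mul, one_pow, mul_one] at this
    exact this
  have a2 : ∫ ω, (X - Y) ω ^ 2 ∂μ =
      ∫ ω, X ω ^ 2 ∂μ + ∫ ω, Y ω ^ 2 ∂μ - 2 * ∫ ω, X ω * Y ω ∂μ := by
    have := hV.mom_add hX hY (-1)
    simp only [neg_mul, one_mul, ← sub_eq_add_neg, neg_sq, one_pow, mul_neg, mul_one] at this
    exact this
  rw [integral_div, integral_sub i6 i4, integral_sub i5 i3, integral_add i1 i2,
    integral_const_mul, integral_const_mul, mm hs, mm hd, mm hX, mm hY, a1, a2]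
  ring

lemma GaussSp.lln (hV : GaussSp μ V) (X : ℕ → Ω → ℝ) (hX : ∀ k, X k ∈ V) (m v C p : ℝ)
    (hp : p < 2) (hv : ∀ k, ∫ ω, X k ω ^ 2 ∂μ = v)
    (hC : ∀ n : ℕ, 1 ≤ n → ∑ i ∈ range n, ∑ j ∈ range n, |∫ ω, X i ω * X j ω ∂μ| ≤ C * (n : ℝ) ^ p) :
    ∀ᵐ ω ∂μ, Tendsto (fun n : ℕ => (1 / (n : ℝ)) * ∑ k ∈ range n, (m + X k ω) ^ 2) atTop
      (nhds (m ^ 2 + v)) := by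
  set M := m ^ 2 + v with hM
  have hr : ∀ i j, |∫ ω, X i ω * X j ω ∂μ| ≤ v := by
    intro i j
    have h1 := hV.mom_add (hX i) (hX j) 1
    have h2 := hV.mom_add (hX i) (hX j) (-1)
    have h3 : 0 ≤ ∫ ω, (X i ω + 1 * X j ω) ^ 2 ∂μ := integral_nonneg fun _ => sq_nonneg _
    have h4 : 0 ≤ ∫ ω, (X i ω + -1 * X j ω) ^ 2 ∂μ := integral_nonneg fun _ => sq_nonneg _
    rw [hv, hv] at h1 h2
    rw [abs_le]
    constructor <;> linarith
  have hv0 : 0 ≤ v := (abs_nonneg _).trans (hr 0 0)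
  have e1 : ∀ k, ∫ ω, (m + X k ω) ^ 2 ∂μ = M := fun k => by
    obtain ⟨h, w, hw⟩ := hV _ (hX k)
    rw [(gl_mom h hw m).1, hv]
  have key : ∀ i j, Integrable (fun ω => ((m + X i ω) ^ 2 - M) * ((m + X j ω) ^ 2 - M)) μ ∧
      ∫ ω, ((m + X i ω) ^ 2 - M) * ((m + X j ω) ^ 2 - M) ∂μ =
        4 * m ^ 2 * (∫ ω, X i ω * X j ω ∂μ) + 2 * (∫ ω, X i ω * X j ω ∂μ) ^ 2 := by
    intro i j
    obtain ⟨p1, p2⟩ := hV.prod (hX i) (hX j) m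
    have i1 := (hV.int (hX i) m 2).const_mul M
    have i2 := (hV.int (hX j) m 2).const_mul M
    have i3 : Integrable (fun _ : Ω => M ^ 2) μ := integrable_const _
    have e : (fun ω => ((m + X i ω) ^ 2 - M) * ((m + X j ω) ^ 2 - M)) = fun ω =>
      (m + X i ω) ^ 2 * (m + X j ω) ^ 2 - M * (m + X i ω) ^ 2 - M * (m + X j ω) ^ 2 + M ^ 2 := by
      funext ω; ring
    rw [e]
    refine ⟨((p1.sub i1).sub i2).add i3, ?_⟩
    have j1 : Integrable (fun ω => (m + X i ω) ^ 2 * (m + X j ω) ^ 2 - M * (m + X i ω) ^ 2) μ :=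
      p1.sub i1
    have j2 : Integrable (fun ω => (m + X i ω) ^ 2 * (m + X j ω) ^ 2 - M * (m + X i ω) ^ 2 -
      M * (m + X j ω) ^ 2) μ := j1.sub i2
    rw [integral_add j2 i3, integral_sub j1 i2, integral_sub p1 i1, integral_const_mul,
      integral_const_mul, e1, e1, p2, hv, hv]
    simp
    ring
  have ex : ∀ n : ℕ, (fun ω => (∑ k ∈ range n, (m + X k ω) ^ 2 - n * M) ^ 2) =
      fun ω => ∑ i ∈ range n, ∑ j ∈ range n, ((m + X i ω) ^ 2 - M) * ((m + X j ω) ^ 2 - M) := by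
    intro n; funext ω
    rw [← sum_mul_sum, ← sq, sum_sub_distrib]
    simp
  apply lln_nonneg μ (fun k ω => (m + X k ω) ^ 2) (fun k ω => sq_nonneg _) M
    ((4 * m ^ 2 + 2 * v) * C) p hp
  · intro n
    rw [ex]
    exact integrable_finsetSum _ fun i _ => integrable_finsetSum _ fun j _ => (key i j).1
  · intro n hn
    rw [ex, integral_finsetSum _ fun i _ => integrable_finsetSum _ fun j _ => (key i j).1]
    simp_rw [integral_finsetSum _ fun j _ => (key _ j).1, (key _ _).2]
    calc _ ≤ ∑ i ∈ range n, ∑ j ∈ range n, (4 * m ^ 2 + 2 * v) * |∫ ω, X i ω * X j ω ∂μ| := by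
          refine sum_le_sum fun i _ => sum_le_sum fun j _ => ?_
          have h1 := hr i j
          have h2 := le_abs_self (∫ ω, X i ω * X j ω ∂μ)
          have h3 := abs_nonneg (∫ ω, X i ω * X j ω ∂μ)
          rw [← sq_abs (∫ ω, X i ω * X j ω ∂μ)]
          nlinarith [mul_le_mul_of_nonneg_left h2 (sq_nonneg m), mul_le_mul_of_nonneg_right h1 h3]
      _ = (4 * m ^ 2 + 2 * v) * ∑ i ∈ range n, ∑ j ∈ range n, |∫ ω, X i ω * X j ω ∂μ| := by
          simp_rw [mul_sum]
      _ ≤ (4 * m ^ 2 + 2 * v) * (C * (n : ℝ) ^ p) := by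
          gcongr; exact hC n hn
      _ = _ := by ring
end gen

section fin

def coordSp : Submodule ℝ ((ℕ → ℝ) → ℝ) :=
  Submodule.span ℝ (Set.range fun (i : ℕ) (ω : ℕ → ℝ) => ω i)

lemma coord_mem (i : ℕ) : (fun ω : ℕ → ℝ => ω i) ∈ coordSp :=
  Submodule.subset_span ⟨i, rfl⟩

lemma coordSp_gauss {μ : Measure (ℕ → ℝ)} {c : ℤ → ℝ}
    (hgauss : ∀ (n : ℕ) (a : Fin n → ℝ),
      Measure.map (fun ω : ℕ → ℝ => ∑ k : Fin n, a k * ω (k : ℕ)) μ =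
        ProbabilityTheory.gaussianReal 0
          (Real.toNNReal (∑ i : Fin n, ∑ j : Fin n, a i * a j * c ((i : ℤ) - (j : ℤ))))) :
    GaussSp μ coordSp := by
  intro X hX
  obtain ⟨f, rfl⟩ := Finsupp.mem_span_range_iff_exists_finsupp.1 hX
  set n := f.support.sup id + 1 with hn
  have e : (f.sum fun i a => a • fun ω : ℕ → ℝ => ω i) =
      fun ω : ℕ → ℝ => ∑ k : Fin n, f k * ω (k : ℕ) := by
    funext ω
    rw [Fin.sum_univ_eq_sum_range (fun k => f k * ω k) n, Finsupp.sum, Finset.sum_apply]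
    simp only [Pi.smul_apply, smul_eq_mul]
    apply sum_subset
    · intro i hi
      rw [Finset.mem_range, hn]
      exact Nat.lt_succ_of_le (Finset.le_sup (f := id) hi)
    · intro i _ hi
      rw [Finsupp.notMem_support_iff.1 hi, zero_mul]
  rw [e]
  exact ⟨by fun_prop, _, hgauss n fun k => f k⟩

lemma gauss_sq {μ : Measure (ℕ → ℝ)} {c : ℤ → ℝ}
    (hgauss : ∀ (n : ℕ) (a : Fin n → ℝ),
      Measure.map (fun ω : ℕ → ℝ => ∑ k : Fin n, a k * ω (k : ℕ)) μ =
        ProbabilityTheory.gaussianReal 0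
          (Real.toNNReal (∑ i : Fin n, ∑ j : Fin n, a i * a j * c ((i : ℤ) - (j : ℤ)))))
    (n : ℕ) (a : ℕ → ℝ)
    (h0 : 0 ≤ ∑ i ∈ range n, ∑ j ∈ range n, a i * a j * c ((i : ℤ) - (j : ℤ))) :
    ∫ ω, (∑ k ∈ range n, a k * ω k) ^ 2 ∂μ =
      ∑ i ∈ range n, ∑ j ∈ range n, a i * a j * c ((i : ℤ) - (j : ℤ)) := by
  have h1 := hgauss n fun k => a k
  have h2 := (gauss_moments 0 (Real.toNNReal (∑ i : Fin n, ∑ j : Fin n,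
    a i * a j * c ((i : ℤ) - (j : ℤ))))).1
  have hm : Measurable (fun ω : ℕ → ℝ => ∑ k : Fin n, a k * ω (k : ℕ)) := by fun_prop
  rw [← h1, integral_map hm.aemeasurable (by fun_prop)] at h2
  have e : ∑ i : Fin n, ∑ j : Fin n, a i * a j * c ((i : ℤ) - (j : ℤ)) =
      ∑ i ∈ range n, ∑ j ∈ range n, a i * a j * c ((i : ℤ) - (j : ℤ)) := by
    rw [← Fin.sum_univ_eq_sum_range
      (fun i => ∑ j ∈ range n, a i * a j * c ((i : ℤ) - (j : ℤ))) n]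
    refine sum_congr rfl fun i _ => ?_
    rw [← Fin.sum_univ_eq_sum_range (fun j => a i * a j * c ((i : ℤ) - (j : ℤ))) n]
  rw [e, Real.coe_toNNReal _ h0] at h2
  simp_rw [fun ω : ℕ → ℝ => Fin.sum_univ_eq_sum_range (fun k => a k * ω k) n] at h2
  simpa using h2

lemma gauss_cov {μ : Measure (ℕ → ℝ)} [IsProbabilityMeasure μ] {c : ℤ → ℝ}
    (hgauss : ∀ (n : ℕ) (a : Fin n → ℝ),
      Measure.map (fun ω : ℕ → ℝ => ∑ k : Fin n, a k * ω (k : ℕ)) μ =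
        ProbabilityTheory.gaussianReal 0
          (Real.toNNReal (∑ i : Fin n, ∑ j : Fin n, a i * a j * c ((i : ℤ) - (j : ℤ)))))
    (hc : ∀ k, 0 ≤ c k) (heven : ∀ k, c (-k) = c k) (p q : ℕ) :
    ∫ ω, ω p * ω q ∂μ = c ((p : ℤ) - (q : ℤ)) := by
  have hV := coordSp_gauss hgauss
  -- a = indicator of p plus indicator of q
  have gen : ∀ s t : ℝ, 0 ≤ s → 0 ≤ t → ∫ ω, (s * ω p + t * ω q) ^ 2 ∂μ =
      s * s * c 0 + t * t * c 0 + 2 * s * t * c ((p : ℤ) - (q : ℤ)) := by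
    intro s t hs ht
    set n := p + q + 1
    set a : ℕ → ℝ := fun k => s * (if k = p then 1 else 0) + t * (if k = q then 1 else 0) with ha
    have hsum : ∀ f : ℕ → ℝ, ∑ k ∈ range n, a k * f k = s * f p + t * f q := by
      intro f
      simp only [ha, add_mul, sum_add_distrib, mul_assoc, ← mul_sum, ite_mul, one_mul, zero_mul,
        Finset.sum_ite_eq', Finset.mem_range]
      rw [if_pos (by omega), if_pos (by omega)]
    have e : ∑ i ∈ range n, ∑ j ∈ range n, a i * a j * c ((i : ℤ) - (j : ℤ)) =
        s * s * c 0 + t * t * c 0 + 2 * s * t * c ((p : ℤ) - (q : ℤ)) := by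
      simp_rw [mul_assoc, ← mul_sum]
      rw [hsum fun i => ∑ j ∈ range n, a j * c ((i : ℤ) - (j : ℤ)),
        hsum fun j => c ((p : ℤ) - (j : ℤ)), hsum fun j => c ((q : ℤ) - (j : ℤ)), sub_self, sub_self,
        ← heven ((q : ℤ) - p), neg_sub]
      ring
    have h0 : 0 ≤ ∑ i ∈ range n, ∑ j ∈ range n, a i * a j * c ((i : ℤ) - (j : ℤ)) := by
      rw [e]
      have := hc 0
      have := hc ((p : ℤ) - (q : ℤ))
      positivity
    have := gauss_sq hgauss n a h0
    rw [e] at this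
    rw [← this]
    congr 1; funext ω; rw [hsum]
  have h1 := gen 1 1 zero_le_one zero_le_one
  have h2 := gen 1 0 zero_le_one le_rfl
  have h3 := gen 0 1 le_rfl zero_le_one
  have h4 := hV.mom_add (coord_mem p) (coord_mem q) 1
  simp only [one_mul, zero_mul, mul_one, mul_zero, add_zero, zero_add, one_pow] at h1 h2 h3 h4
  linarith

lemma main_avg
    {σ γ h H : ℝ} (hh : 0 < h) (hH : H ∈ Set.Ioo (1/2 : ℝ) 1)
    {μ : Measure (ℕ → ℝ)} [IsProbabilityMeasure μ]
    (hgauss : ∀ (n : ℕ) (a : Fin n → ℝ),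
      Measure.map (fun ω : ℕ → ℝ => ∑ k : Fin n, a k * ω (k : ℕ)) μ =
        ProbabilityTheory.gaussianReal 0
          (Real.toNNReal (∑ i : Fin n, ∑ j : Fin n,
            a i * a j * mixedCov σ γ h H ((i : ℤ) - (j : ℤ))))) (m : ℝ) (a : ℕ → ℝ) :
    ∀ᵐ ω ∂μ, Tendsto (fun n : ℕ => (1 / (n : ℝ)) *
        ∑ k ∈ range n, (m + ∑ l ∈ range 4, a l * ω (k + l)) ^ 2) atTop
      (nhds (m ^ 2 + ∑ l ∈ range 4, ∑ l' ∈ range 4, a l * a l' *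
        mixedCov σ γ h H ((l : ℤ) - (l' : ℤ)))) := by
  have hV := coordSp_gauss hgauss
  have hcov := gauss_cov hgauss (mixedCov_nonneg hh hH.1) (mixedCov_even σ γ h H)
  have hX : ∀ k, (fun ω : ℕ → ℝ => ∑ l ∈ range 4, a l * ω (k + l)) ∈ coordSp := by
    intro k
    have : (fun ω : ℕ → ℝ => ∑ l ∈ range 4, a l * ω (k + l)) =
        ∑ l ∈ range 4, a l • (fun ω : ℕ → ℝ => ω (k + l)) := by
      funext ω; simp [Finset.sum_apply]
    rw [this]
    exact Submodule.sum_mem _ fun l _ => Submodule.smul_mem _ _ (coord_mem _)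
  have hprod : ∀ i j : ℕ, ∫ ω : ℕ → ℝ, (∑ l ∈ range 4, a l * ω (i + l)) *
      (∑ l ∈ range 4, a l * ω (j + l)) ∂μ = ∑ l ∈ range 4, ∑ l' ∈ range 4, a l * a l' *
        mixedCov σ γ h H (((i + l : ℕ) : ℤ) - ((j + l' : ℕ) : ℤ)) := by
    intro i j
    have e : (fun ω : ℕ → ℝ => (∑ l ∈ range 4, a l * ω (i + l)) *
      (∑ l ∈ range 4, a l * ω (j + l))) = fun ω => ∑ l ∈ range 4, ∑ l' ∈ range 4, a l * a l' *
        (ω (i + l) * ω (j + l')) := by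
      funext ω
      rw [sum_mul_sum]
      refine sum_congr rfl fun _ _ => sum_congr rfl fun _ _ => by ring
    have hi : ∀ l l' : ℕ, Integrable (fun ω : ℕ → ℝ => a l * a l' * (ω (i + l) * ω (j + l'))) μ :=
      fun l l' => (hV.int_mul (coord_mem _) (coord_mem _)).const_mul _
    rw [e, integral_finsetSum _ fun l _ => integrable_finsetSum _ fun l' _ => hi l l']
    refine sum_congr rfl fun l _ => ?_
    rw [integral_finsetSum _ fun l' _ => hi l l']
    refine sum_congr rfl fun l' _ => ?_
    rw [integral_const_mul, hcov]
  refine hV.lln (fun k ω => ∑ l ∈ range 4, a l * ω (k + l)) hX m _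
    ((∑ l ∈ range 4, ∑ l' ∈ range 4, |a l * a l'|) *
      ((σ ^ 2 * h + γ ^ 2 * h ^ (2 * H)) * 5 ^ (2 * H))) (2 * H) (by linarith [hH.2]) ?_ ?_
  · intro k
    simp_rw [sq]
    rw [hprod]
    refine sum_congr rfl fun l _ => sum_congr rfl fun l' _ => ?_
    congr 2
    push_cast; ring
  · intro n hn
    simp_rw [hprod]
    calc _ ≤ ∑ i ∈ range n, ∑ j ∈ range n, ∑ l ∈ range 4, ∑ l' ∈ range 4, |a l * a l'| *
          mixedCov σ γ h H (((i + l : ℕ) : ℤ) - ((j + l' : ℕ) : ℤ)) := by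
          refine sum_le_sum fun i _ => sum_le_sum fun j _ => ?_
          refine (abs_sum_le_sum_abs _ _).trans (sum_le_sum fun l _ => ?_)
          refine (abs_sum_le_sum_abs _ _).trans (sum_le_sum fun l' _ => ?_)
          rw [abs_mul, abs_of_nonneg (mixedCov_nonneg hh hH.1 _)]
      _ = ∑ l ∈ range 4, ∑ l' ∈ range 4, |a l * a l'| * ∑ i ∈ range n, ∑ j ∈ range n,
          mixedCov σ γ h H (((i + l : ℕ) : ℤ) - ((j + l' : ℕ) : ℤ)) := by
          simp_rw [mul_sum]
          rw [sum_congr rfl fun i _ => sum_comm, sum_comm]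
          refine sum_congr rfl fun l _ => ?_
          rw [sum_congr rfl fun i _ => sum_comm, sum_comm]
      _ ≤ ∑ l ∈ range 4, ∑ l' ∈ range 4, |a l * a l'| *
          ((σ ^ 2 * h + γ ^ 2 * h ^ (2 * H)) * 5 ^ (2 * H) * (n : ℝ) ^ (2 * H)) := by
          refine sum_le_sum fun l hl => sum_le_sum fun l' hl' => ?_
          exact mul_le_mul_of_nonneg_left (mixedCov_sum_shift hh hH.1 n l l'
            (Finset.mem_range.1 hl) (Finset.mem_range.1 hl') hn) (abs_nonneg _)
      _ = _ := by
          simp_rw [← sum_mul]; ring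
end fin

/-- Almost-sure convergence of the three empirical second-moment statistics of the
drifted increments `Y_k(ω) = θ h + ω_k` of a mixed fractional Brownian motion. -/
theorem empirical_statistics_ae_tendsto
    (σ γ h H θ : ℝ) (hσ : 0 < σ) (hγ : 0 < γ) (hh : 0 < h)
    (hH : H ∈ Set.Ioo (1/2 : ℝ) 1)
    (μ : Measure (ℕ → ℝ)) [IsProbabilityMeasure μ]
    (hinv : MeasurePreserving shift μ μ)
    (hgauss : ∀ (n : ℕ) (a : Fin n → ℝ),
      Measure.map (fun ω : ℕ → ℝ => ∑ k : Fin n, a k * ω (k : ℕ)) μ =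
        ProbabilityTheory.gaussianReal 0
          (Real.toNNReal (∑ i : Fin n, ∑ j : Fin n,
            a i * a j * mixedCov σ γ h H ((i : ℤ) - (j : ℤ))))) :
    ∀ᵐ ω ∂μ,
      Tendsto (fun n : ℕ =>
          (1 / (n : ℝ)) * ∑ k ∈ Finset.range n, (θ * h + ω k) ^ 2)
        atTop (nhds (θ ^ 2 * h ^ 2 + σ ^ 2 * h + γ ^ 2 * h ^ (2 * H))) ∧
      Tendsto (fun n : ℕ =>
          (1 / (n : ℝ)) * ∑ k ∈ Finset.range n, (θ * h + ω k) * (θ * h + ω (k + 1)))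
        atTop (nhds (θ ^ 2 * h ^ 2 + γ ^ 2 * h ^ (2 * H) * ((2 : ℝ) ^ (2 * H - 1) - 1))) ∧
      Tendsto (fun n : ℕ =>
          (1 / (n : ℝ)) * ∑ k ∈ Finset.range n,
            ((θ * h + ω k) + (θ * h + ω (k + 1))) * ((θ * h + ω (k + 2)) + (θ * h + ω (k + 3))))
        atTop (nhds (4 * θ ^ 2 * h ^ 2 +
          γ ^ 2 * h ^ (2 * H) * (2 : ℝ) ^ (2 * H) * ((2 : ℝ) ^ (2 * H - 1) - 1))) := by
  have hp : 0 < 2 * H := by linarith [hH.1]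
  have A := main_avg hh hH hgauss
  have c0 : mixedCov σ γ h H 0 = σ ^ 2 * h + γ ^ 2 * h ^ (2 * H) := by
    simp [mixedCov, rhoH_zero hH.1]
  have p4 : (4 : ℝ) ^ (2 * H) = 2 ^ (2 * H) * 2 ^ (2 * H) := by
    rw [← Real.mul_rpow (by norm_num) (by norm_num)]; norm_num
  have p1 : (2 : ℝ) ^ (2 * H - 1) = 2 ^ (2 * H) / 2 := Real.rpow_sub_one (by norm_num) _
  have c1 : mixedCov σ γ h H 1 = γ ^ 2 * h ^ (2 * H) * ((2 ^ (2 * H) - 2) / 2) := by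
    simp only [mixedCov, rhoH]
    norm_num [Real.zero_rpow hp.ne']
  have c2 : mixedCov σ γ h H 2 = γ ^ 2 * h ^ (2 * H) * ((3 ^ (2 * H) + 1 - 2 * 2 ^ (2 * H)) / 2) := by
    simp only [mixedCov, rhoH]
    norm_num
  have c3 : mixedCov σ γ h H 3 = γ ^ 2 * h ^ (2 * H) *
      ((4 ^ (2 * H) + 2 ^ (2 * H) - 2 * 3 ^ (2 * H)) / 2) := by
    simp only [mixedCov, rhoH]
    norm_num
  have e1 := mixedCov_even σ γ h H 1
  have e2 := mixedCov_even σ γ h H 2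
  have e3 := mixedCov_even σ γ h H 3
  filter_upwards [A (θ * h) (fun k => if k = 0 then 1 else 0),
    A (2 * (θ * h)) (fun k => if k = 0 then 1 else if k = 1 then 1 else 0),
    A 0 (fun k => if k = 0 then 1 else if k = 1 then -1 else 0),
    A (4 * (θ * h)) (fun _ => 1),
    A 0 (fun k => if k = 0 then 1 else if k = 1 then 1 else -1)] with ω t1 t2 t3 t4 t5
  simp only [sum_range_succ _ 3, sum_range_succ _ 2, sum_range_succ _ 1, sum_range_one] at t1 t2 t3 t4 t5
  norm_num at t1 t2 t3 t4 t5
  rw [c0] at t1 t2 t3 t4 t5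
  simp only [e1, e2, e3, c1, c2, c3, p4] at t1 t2 t3 t4 t5
  rw [p1]
  refine ⟨?_, ?_, ?_⟩
  · convert t1 using 2
    · simp
    · ring
  · convert (t2.sub t3).div_const 4 using 2
    · rw [← mul_sub, ← sum_sub_distrib, mul_div_assoc, sum_div, one_div]
      congr 1
      exact sum_congr rfl fun k _ => by ring
    · ring
  · convert (t4.sub t5).div_const 4 using 2
    · rw [← mul_sub, ← sum_sub_distrib, mul_div_assoc, sum_div, one_div]
      congr 1
      exact sum_congr rfl fun k _ => by ring
    · ring
end

section
/- For every integer m ≥ 1, the Lebesgue constant of the Chebyshev–Gauss nodes satisfies max_{x∈[−1,1]} Σ_{j=1}^m |𝓛_j(x)| ≤ (2/π) ln(m + 1) + 1. -/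
open Filter Set Finset Real

noncomputable def chebNode (m j : ℕ) : ℝ :=
  Real.cos ((2 * (j : ℝ) - 1) * Real.pi / (2 * (m : ℝ)))

noncomputable def lagBasis (m j : ℕ) (x : ℝ) : ℝ :=
  ∏ i ∈ (Finset.Icc 1 m).erase j, (x - chebNode m i) / (chebNode m j - chebNode m i)

open Polynomial in
lemma cheb_T_eq (m : ℕ) : ∃ c : ℝ, Polynomial.Chebyshev.T ℝ m
    = C c * Lagrange.nodal (Finset.Icc 1 m) (chebNode m) := by
  refine ⟨(Polynomial.Chebyshev.T ℝ m).leadingCoeff, ?_⟩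
  have hr := Polynomial.Chebyshev.roots_T_real m
  have hinj : Set.InjOn (fun (k : ℕ) => Real.cos ((2 * k + 1) * Real.pi / (2 * m)))
      (Finset.range m) :=
    (Finset.range m).nodup_map_iff_injOn.mp (Polynomial.Chebyshev.roots_T_real_nodup m)
  have hc : (Polynomial.Chebyshev.T ℝ m).roots.card
      = (Polynomial.Chebyshev.T ℝ m).natDegree := by
    rw [hr, Finset.card_val, Finset.card_image_of_injOn hinj]
    simp
  conv_lhs => rw [← Polynomial.C_leadingCoeff_mul_prod_multiset_X_sub_C hc, hr, Finset.image_val_of_injOn hinj,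
    Multiset.map_map]
  have : Lagrange.nodal (Finset.Icc 1 m) (chebNode m) =
      ∏ k ∈ Finset.range m, (X - C (Real.cos ((2 * k + 1) * Real.pi / (2 * m)))) := by
    rw [Lagrange.nodal, Finset.prod_bij' (fun i _ => i - 1) (fun i _ => i + 1)]
    · intro a ha; simp at ha ⊢; omega
    · intro a ha; simp at ha ⊢; omega
    · intro a ha; simp at ha ⊢; omega
    · intro a ha; simp at ha ⊢
    · intro a ha
      simp only [Finset.mem_Icc] at ha
      rw [chebNode, Nat.cast_sub ha.1]
      congr 4
      push_cast; ring
  rw [this]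
  simp [Finset.prod]

noncomputable def thA (m i : ℕ) : ℝ := (2 * (i : ℝ) + 1) * Real.pi / (2 * (m : ℝ))

lemma chebNode_succ (m i : ℕ) : chebNode m (i + 1) = Real.cos (thA m i) := by
  rw [chebNode, thA]; congr 2; push_cast; ring

lemma thA_pos (m i : ℕ) (hm : 1 ≤ m) : 0 < thA m i := by
  have : (0:ℝ) < m := by exact_mod_cast hm
  have := Real.pi_pos
  unfold thA; positivity

lemma thA_eq (m i : ℕ) (hm : 1 ≤ m) : thA m i = Real.pi / (2 * m) + i * (Real.pi / m) := by
  have : (0:ℝ) < m := by exact_mod_cast hm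
  unfold thA; field_simp; ring

lemma thA_le (m i : ℕ) (hi : i < m) : thA m i ≤ Real.pi - Real.pi / (2 * m) := by
  have h : (0:ℝ) < m := by exact_mod_cast (by omega : 0 < m)
  have h1 : (i:ℝ) + 1 ≤ m := by exact_mod_cast hi
  have := Real.pi_pos
  have : Real.pi - Real.pi / (2 * m) - thA m i = (m - (i + 1)) * Real.pi / m := by
    unfold thA; field_simp; ring
  have : 0 ≤ ((m:ℝ) - (i + 1)) * Real.pi / m := by
    apply div_nonneg _ h.le
    apply mul_nonneg <;> linarith
  linarith

lemma thA_lt_pi (m i : ℕ) (hi : i < m) : thA m i < Real.pi := by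
  have h : (0:ℝ) < m := by exact_mod_cast (by omega : 0 < m)
  have := thA_le m i hi
  have : 0 < Real.pi / (2 * m) := by have := Real.pi_pos; positivity
  linarith

lemma cos_m_thA (m i : ℕ) (hm : 1 ≤ m) : Real.cos (m * thA m i) = 0 := by
  have : (0:ℝ) < m := by exact_mod_cast hm
  rw [Real.cos_eq_zero_iff]
  refine ⟨i, ?_⟩
  unfold thA; push_cast; field_simp

lemma abs_sin_m_thA (m i : ℕ) (hm : 1 ≤ m) : |Real.sin (m * thA m i)| = 1 := by
  have h := Real.sin_sq_add_cos_sq (m * thA m i)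
  rw [cos_m_thA m i hm] at h
  rw [← sq_eq_sq₀ (abs_nonneg _) zero_le_one, sq_abs]
  linarith

lemma chebNode_injOn (m : ℕ) : Set.InjOn (chebNode m) (Finset.Icc 1 m) := by
  have hinj : Set.InjOn (fun (k : ℕ) => Real.cos ((2 * k + 1) * Real.pi / (2 * m)))
      (Finset.range m) :=
    (Finset.range m).nodup_map_iff_injOn.mp (Polynomial.Chebyshev.roots_T_real_nodup m)
  intro a ha b hb hab
  simp only [Finset.coe_Icc, Set.mem_Icc] at ha hb
  obtain ⟨a, rfl⟩ : ∃ a', a = a' + 1 := ⟨a - 1, by omega⟩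
  obtain ⟨b, rfl⟩ : ∃ b', b = b' + 1 := ⟨b - 1, by omega⟩
  rw [chebNode_succ, chebNode_succ] at hab
  have := hinj (x₁ := a) (x₂ := b) (by simp; omega) (by simp; omega) hab
  rw [this]

lemma lag_formula (m i : ℕ) (hi : i < m) (θ : ℝ) :
    |lagBasis m (i+1) (Real.cos θ)| * |Real.cos θ - Real.cos (thA m i)| * m
      = |Real.cos (m * θ)| * Real.sin (thA m i) := by
  have hm : 1 ≤ m := by omega
  have hm0 : (0:ℝ) < m := by exact_mod_cast hm
  obtain ⟨c, hc⟩ := cheb_T_eq m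
  have hmem : i + 1 ∈ Finset.Icc 1 m := by simp; omega
  set N := Lagrange.nodal ((Finset.Icc 1 m).erase (i+1)) (chebNode m) with hN
  have h1 : Real.cos (m * θ) = c * ((Real.cos θ - Real.cos (thA m i)) * N.eval (Real.cos θ)) := by
    have := Polynomial.Chebyshev.T_real_cos θ m
    rw [hc, Lagrange.nodal_eq_mul_nodal_erase hmem] at this
    simp [chebNode_succ] at this
    rw [← this]
  have h2 : m * (Polynomial.Chebyshev.U ℝ (m - 1)).eval (Real.cos (thA m i))
      = c * N.eval (Real.cos (thA m i)) := by
    have := congrArg (Polynomial.eval (chebNode m (i+1)))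
      (congrArg Polynomial.derivative hc)
    rw [Polynomial.Chebyshev.T_derivative_eq_U, Polynomial.derivative_C_mul,
      Polynomial.eval_C_mul, Lagrange.eval_nodal_derivative_eval_node_eq hmem,
      chebNode_succ] at this
    simpa using this
  have h3 := Polynomial.Chebyshev.U_real_cos (thA m i) (m - 1)
  have h4 := abs_sin_m_thA m i hm
  have hs : 0 < Real.sin (thA m i) :=
    Real.sin_pos_of_pos_of_lt_pi (thA_pos m i hm) (thA_lt_pi m i hi)
  push_cast at h3
  rw [sub_add_cancel] at h3
  rw [← h3, abs_mul, abs_of_pos hs] at h4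
  have h5 : lagBasis m (i+1) (Real.cos θ) = N.eval (Real.cos θ) / N.eval (Real.cos (thA m i)) := by
    rw [lagBasis, Finset.prod_div_distrib, hN, Lagrange.eval_nodal, Lagrange.eval_nodal,
      ← chebNode_succ]
  have h6 : N.eval (Real.cos (thA m i)) ≠ 0 := by
    intro h
    rw [h] at h2
    have : (Polynomial.Chebyshev.U ℝ (m - 1)).eval (Real.cos (thA m i)) = 0 := by
      rcases mul_eq_zero.1 (h2.trans (mul_zero c)) with h | h
      · exact absurd h hm0.ne'
      · exact h
    rw [this] at h4
    simp at h4
  have h7 : m * |(Polynomial.Chebyshev.U ℝ (m - 1)).eval (Real.cos (thA m i))|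
      = |c| * |N.eval (Real.cos (thA m i))| := by
    rw [← abs_mul, ← h2, abs_mul, abs_of_pos hm0]
  have h8 : (m:ℝ) = |c| * |N.eval (Real.cos (thA m i))| * Real.sin (thA m i) := by
    rw [← h7, mul_assoc, h4, mul_one]
  have h9 : 0 < |N.eval (Real.cos (thA m i))| := abs_pos.2 h6
  rw [h1, h5, abs_div, abs_mul, abs_mul]
  conv_lhs => rw [h8]
  field_simp

noncomputable def KK (x : ℝ) : ℝ := |Real.cos x / Real.sin x|

lemma KK_neg (x : ℝ) : KK (-x) = KK x := by simp [KK, div_neg]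

lemma KK_pi_sub (x : ℝ) : KK (Real.pi - x) = KK x := by
  simp [KK, Real.cos_pi_sub, Real.sin_pi_sub, neg_div]

noncomputable def GG (m : ℕ) (θ : ℝ) : ℝ :=
  ∑ i ∈ Finset.range m, (KK ((thA m i - θ) / 2) + KK ((thA m i + θ) / 2))

lemma GG_periodic (m : ℕ) (hm : 1 ≤ m) : Function.Periodic (GG m) (Real.pi / m) := by
  intro θ
  have hm0 : (0:ℝ) < m := by exact_mod_cast hm
  have e1 : ∑ i ∈ Finset.range m, KK ((thA m i + (θ + Real.pi / m)) / 2)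
      = ∑ i ∈ Finset.range m, KK ((thA m (i+1) + θ) / 2) := by
    apply Finset.sum_congr rfl
    intro i _
    rw [thA_eq m i hm, thA_eq m (i+1) hm]; congr 2; push_cast; ring
  have e2 : ∑ i ∈ Finset.range m, KK ((thA m i - θ) / 2)
      = ∑ i ∈ Finset.range m, KK ((thA m (i+1) - (θ + Real.pi / m)) / 2) := by
    apply Finset.sum_congr rfl
    intro i _
    rw [thA_eq m i hm, thA_eq m (i+1) hm]; congr 2; push_cast; ring
  have s1 := Finset.sum_range_succ (fun i => KK ((thA m i + θ) / 2)) m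
  have s2 := Finset.sum_range_succ' (fun i => KK ((thA m i + θ) / 2)) m
  have s3 := Finset.sum_range_succ (fun i => KK ((thA m i - (θ + Real.pi / m)) / 2)) m
  have s4 := Finset.sum_range_succ' (fun i => KK ((thA m i - (θ + Real.pi / m)) / 2)) m
  have e3 : KK ((thA m 0 + θ) / 2) = KK ((thA m 0 - (θ + Real.pi / m)) / 2) := by
    rw [← KK_neg]; congr 1; rw [thA_eq m 0 hm]; push_cast; field_simp; ring
  have e4 : KK ((thA m m + θ) / 2) = KK ((thA m m - (θ + Real.pi / m)) / 2) := by
    rw [← KK_pi_sub]; congr 1; rw [thA_eq m m hm]; field_simp; ring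
  simp only [GG, Finset.sum_add_distrib]
  rw [e1, e2]
  linarith

lemma trig_id (t θ : ℝ) (hA : Real.sin ((t + θ)/2) ≠ 0) (hB : Real.sin ((t - θ)/2) ≠ 0) :
    Real.sin t = (Real.cos θ - Real.cos t) *
      ((Real.cos ((t - θ)/2) / Real.sin ((t - θ)/2)
      + Real.cos ((t + θ)/2) / Real.sin ((t + θ)/2)) / 2) := by
  have h1 : Real.cos θ - Real.cos t = 2 * Real.sin ((t+θ)/2) * Real.sin ((t-θ)/2) := by
    have a : θ = (t+θ)/2 - (t-θ)/2 := by ring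
    have b : t = (t+θ)/2 + (t-θ)/2 := by ring
    generalize (t+θ)/2 = A at *
    generalize (t-θ)/2 = B at *
    rw [a, b, Real.cos_sub, Real.cos_add]; ring
  have h2 : Real.sin t = Real.sin ((t+θ)/2 + (t-θ)/2) := by congr 1; ring
  rw [h1, h2, Real.sin_add]
  field_simp

lemma cos_sub_eq (t θ : ℝ) :
    Real.cos θ - Real.cos t = 2 * Real.sin ((t+θ)/2) * Real.sin ((t-θ)/2) := by
  have a : Real.cos θ = Real.cos ((t+θ)/2 - (t-θ)/2) := by congr 1; ring
  have b : Real.cos t = Real.cos ((t+θ)/2 + (t-θ)/2) := by congr 1; ring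
  rw [a, b, Real.cos_sub, Real.cos_add]; ring

lemma lag_le (m i : ℕ) (hi : i < m) (θ : ℝ) (hθ : Real.cos (m * θ) ≠ 0) :
    |lagBasis m (i+1) (Real.cos θ)| ≤ |Real.cos (m * θ)| / (2 * m) *
      (KK ((thA m i - θ) / 2) + KK ((thA m i + θ) / 2)) := by
  have hm : 1 ≤ m := by omega
  have hm0 : (0:ℝ) < m := by exact_mod_cast hm
  have hs : 0 < Real.sin (thA m i) :=
    Real.sin_pos_of_pos_of_lt_pi (thA_pos m i hm) (thA_lt_pi m i hi)
  have hf := lag_formula m i hi θ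
  have hne : Real.cos θ - Real.cos (thA m i) ≠ 0 := by
    intro h
    rw [h] at hf
    have : 0 < |Real.cos (m * θ)| * Real.sin (thA m i) := mul_pos (abs_pos.2 hθ) hs
    simp at hf
    rcases hf with h | h
    · exact hθ h
    · exact hs.ne' h
  have hd := cos_sub_eq (thA m i) θ
  have hA : Real.sin ((thA m i + θ)/2) ≠ 0 := by
    intro h; rw [h] at hd; simp at hd; exact hne hd
  have hB : Real.sin ((thA m i - θ)/2) ≠ 0 := by
    intro h; rw [h] at hd; simp at hd; exact hne hd
  have ht := trig_id (thA m i) θ hA hB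
  have hp : 0 < |Real.cos θ - Real.cos (thA m i)| := abs_pos.2 hne
  have ht2 : Real.sin (thA m i) ≤ |Real.cos θ - Real.cos (thA m i)| *
      ((KK ((thA m i - θ) / 2) + KK ((thA m i + θ) / 2)) / 2) := by
    rw [← abs_of_pos hs]
    conv_lhs => rw [ht, abs_mul, abs_div, abs_of_pos (two_pos : (0:ℝ) < 2)]
    gcongr
    exact abs_add_le _ _
  have : |lagBasis m (i+1) (Real.cos θ)| * (|Real.cos θ - Real.cos (thA m i)| * m) ≤
    (|Real.cos (m * θ)| / (2 * m) *
      (KK ((thA m i - θ) / 2) + KK ((thA m i + θ) / 2))) *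
      (|Real.cos θ - Real.cos (thA m i)| * m) := by
    rw [← mul_assoc, hf]
    calc _ ≤ |Real.cos (m * θ)| * _ := mul_le_mul_of_nonneg_left ht2 (abs_nonneg _)
      _ = _ := by field_simp
  exact le_of_mul_le_mul_right this (by positivity)

lemma lag_eq (m i : ℕ) (hi : i < m) (φ : ℝ) (hφ : |φ| < Real.pi / (2 * m)) :
    |Real.cos (m * φ)| / (2 * m) *
      (KK ((thA m i - φ) / 2) + KK ((thA m i + φ) / 2)) = |lagBasis m (i+1) (Real.cos φ)| := by
  have hm : 1 ≤ m := by omega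
  have hm0 : (0:ℝ) < m := by exact_mod_cast hm
  have hl : Real.pi / (2 * m) ≤ thA m i := by
    rw [thA_eq m i hm]
    have := Real.pi_pos
    have : 0 ≤ i * (Real.pi / m) := by positivity
    linarith
  have hu := thA_le m i hi
  obtain ⟨h1, h2⟩ := abs_lt.1 hφ
  have hA : 0 < Real.sin ((thA m i + φ)/2) :=
    Real.sin_pos_of_pos_of_lt_pi (by linarith) (by linarith [Real.pi_pos])
  have hB : 0 < Real.sin ((thA m i - φ)/2) :=
    Real.sin_pos_of_pos_of_lt_pi (by linarith) (by linarith [Real.pi_pos])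
  have hA' : 0 ≤ Real.cos ((thA m i + φ)/2) :=
    Real.cos_nonneg_of_mem_Icc ⟨by linarith [Real.pi_pos], by linarith⟩
  have hB' : 0 ≤ Real.cos ((thA m i - φ)/2) :=
    Real.cos_nonneg_of_mem_Icc ⟨by linarith [Real.pi_pos], by linarith⟩
  have hf := lag_formula m i hi φ
  have hd := cos_sub_eq (thA m i) φ
  have hp : 0 < Real.cos φ - Real.cos (thA m i) := by rw [hd]; positivity
  have ht := trig_id (thA m i) φ hA.ne' hB.ne'
  rw [abs_of_pos hp] at hf
  rw [KK, KK, abs_of_nonneg (div_nonneg hA' hA.le), abs_of_nonneg (div_nonneg hB' hB.le)]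
  have : ((Real.cos φ - Real.cos (thA m i)) * m) ≠ 0 := by positivity
  apply mul_right_cancel₀ this
  rw [← mul_assoc (|lagBasis _ _ _|), hf]
  conv_rhs => rw [ht]
  generalize Real.cos ((thA m i - φ) / 2) / Real.sin ((thA m i - φ) / 2) = u
  generalize Real.cos ((thA m i + φ) / 2) / Real.sin ((thA m i + φ) / 2) = v
  field_simp

lemma lag_le_one (m i : ℕ) (hi : i < m) (φ : ℝ) (hφ : |φ| < Real.pi / (2 * m)) :
    |lagBasis m (i+1) (Real.cos φ)| ≤ |lagBasis m (i+1) 1| := by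
  have hm : 1 ≤ m := by omega
  rw [lagBasis, lagBasis, Finset.abs_prod, Finset.abs_prod]
  apply Finset.prod_le_prod
  · intros; positivity
  · intro k hk
    simp only [Finset.mem_erase, Finset.mem_Icc] at hk
    obtain ⟨k, rfl⟩ : ∃ a', k = a' + 1 := ⟨k - 1, by omega⟩
    rw [abs_div, abs_div]
    refine div_le_div_of_nonneg_right ?_ (abs_nonneg _)
    rw [chebNode_succ]
    have hl : Real.pi / (2 * m) ≤ thA m k := by
      rw [thA_eq m k hm]
      have := Real.pi_pos
      have : 0 ≤ k * (Real.pi / m) := by positivity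
      linarith
    have : Real.cos (thA m k) ≤ Real.cos φ := by
      rw [← Real.cos_abs φ]
      exact Real.cos_le_cos_of_nonneg_of_le_pi (abs_nonneg _)
        (thA_lt_pi m k (by omega)).le (by linarith)
    rw [abs_of_nonneg (by linarith), abs_of_nonneg (by linarith [Real.cos_le_one φ])]
    linarith [Real.cos_le_one φ]

lemma cot_bound (x : ℝ) (h0 : 0 < x) (h1 : x < Real.pi / 2) :
    |Real.cos x / Real.sin x| ≤ 1 / x - x / 3 := by
  have hs : 0 < Real.sin x := Real.sin_pos_of_pos_of_lt_pi h0 (by linarith)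
  have hc : 0 ≤ Real.cos x := Real.cos_nonneg_of_mem_Icc ⟨by linarith, by linarith⟩
  rw [abs_of_nonneg (div_nonneg hc hs.le), div_le_iff₀ hs]
  have key : x * Real.cos x ≤ (1 - x^2/3) * Real.sin x := by
    have hmono : MonotoneOn (fun x : ℝ => (1 - x^2/3) * Real.sin x - x * Real.cos x)
        (Set.Icc 0 (Real.pi/2)) := by
      apply monotoneOn_of_deriv_nonneg (convex_Icc _ _)
      · fun_prop
      · fun_prop
      · intro y hy
        rw [interior_Icc] at hy
        have hd : HasDerivAt (fun x : ℝ => (1 - x^2/3) * Real.sin x - x * Real.cos x)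
            ((-(2*y/3)) * Real.sin y + (1 - y^2/3) * Real.cos y
              - (1 * Real.cos y + y * (-Real.sin y))) y := by
          have a : HasDerivAt (fun x : ℝ => 1 - x^2/3) (-(2*y/3)) y := by
            have := ((hasDerivAt_pow 2 y).div_const 3).const_sub 1
            simpa using this
          exact (a.mul (Real.hasDerivAt_sin y)).sub ((hasDerivAt_id y).mul (Real.hasDerivAt_cos y))
        rw [hd.deriv]
        have ht := Real.lt_tan hy.1 hy.2
        have hcy : 0 < Real.cos y := Real.cos_pos_of_mem_Ioo ⟨by linarith [hy.1], hy.2⟩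
        rw [Real.tan_eq_sin_div_cos, lt_div_iff₀ hcy] at ht
        have : 0 ≤ y / 3 * (Real.sin y - y * Real.cos y) :=
          mul_nonneg (by linarith [hy.1]) (by linarith)
        nlinarith
    have := hmono (a := 0) (b := x) ⟨le_rfl, by linarith⟩ ⟨h0.le, h1.le⟩ h0.le
    simp at this
    linarith
  have : (1 / x - x / 3) * Real.sin x = (1 - x^2/3) * Real.sin x / x := by field_simp
  rw [this, le_div_iff₀ h0]
  linarith

lemma lag_one (m i : ℕ) (hi : i < m) :
    |lagBasis m (i+1) 1| ≤ 4 / Real.pi * (1 / (2 * (i:ℝ) + 1)) -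
      (2 * (i:ℝ) + 1) * (Real.pi / (12 * m ^ 2)) := by
  have hm : 1 ≤ m := by omega
  have hm0 : (0:ℝ) < m := by exact_mod_cast hm
  have hpi := Real.pi_pos
  have h := lag_eq m i hi 0 (by simp; positivity)
  have hb := cot_bound (thA m i / 2) (by have := thA_pos m i hm; linarith)
    (by have := thA_lt_pi m i hi; linarith)
  simp at h
  rw [← h, KK]
  calc _ ≤ (m:ℝ)⁻¹ * 2⁻¹ * ((1 / (thA m i / 2) - thA m i / 2 / 3)
        + (1 / (thA m i / 2) - thA m i / 2 / 3)) := by gcongr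
    _ = _ := by
      unfold thA
      field_simp
      ring

lemma sum_odd (m : ℕ) : ∑ i ∈ Finset.range m, (2 * (i:ℝ) + 1) = m ^ 2 := by
  induction m with
  | zero => simp
  | succ n ih => rw [Finset.sum_range_succ, ih]; push_cast; ring

lemma log_step (m : ℕ) (hm : 1 ≤ m) :
    1 / (2 * (m:ℝ) + 1) ≤ 1 / 2 * (Real.log (m + 1) - Real.log m) := by
  have hm0 : (0:ℝ) < m := by exact_mod_cast hm
  have h := le_hasSum (Real.hasSum_log_one_add_inv hm0) 0 (by intros; positivity)
  rw [← Real.log_div (by positivity) (by positivity)]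
  have : ((m:ℝ) + 1) / m = 1 + (m:ℝ)⁻¹ := by field_simp
  rw [this]
  simp at h ⊢
  linarith

lemma harm_bound (m : ℕ) (hm : 2 ≤ m) :
    ∑ i ∈ Finset.range m, 1 / (2 * (i:ℝ) + 1) ≤ 1 / 2 * Real.log m + 0.987 := by
  induction m, hm using Nat.le_induction with
  | base =>
    have := Real.log_two_gt_d9
    norm_num [Finset.sum_range_succ]
    linarith
  | succ n hn ih =>
    rw [Finset.sum_range_succ]
    have := log_step n (by omega)
    push_cast
    linarith

lemma final_bound (m : ℕ) (hm : 1 ≤ m) :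
    ∑ i ∈ Finset.range m, |lagBasis m (i+1) 1| ≤ (2 / Real.pi) * Real.log (m + 1) + 1 := by
  have hm0 : (0:ℝ) < m := by exact_mod_cast hm
  have hpi := Real.pi_pos
  have hpi3 := Real.pi_gt_d2
  have h1 : ∑ i ∈ Finset.range m, |lagBasis m (i+1) 1| ≤
      4 / Real.pi * (∑ i ∈ Finset.range m, 1 / (2 * (i:ℝ) + 1)) - Real.pi / 12 := by
    calc _ ≤ ∑ i ∈ Finset.range m, (4 / Real.pi * (1 / (2 * (i:ℝ) + 1)) -
        (2 * (i:ℝ) + 1) * (Real.pi / (12 * m ^ 2))) := by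
          apply Finset.sum_le_sum
          intro i hi
          exact lag_one m i (Finset.mem_range.1 hi)
      _ = _ := by
        rw [Finset.sum_sub_distrib, ← Finset.mul_sum, ← Finset.sum_mul, sum_odd]
        field_simp
  have h2 : ∑ i ∈ Finset.range m, 1 / (2 * (i:ℝ) + 1) ≤ 1 / 2 * Real.log (m+1) + 0.987 := by
    rcases Nat.lt_or_ge m 2 with h | h
    · obtain rfl : m = 1 := by omega
      have := Real.log_two_gt_d9
      norm_num
      linarith
    · have := harm_bound m h
      have : Real.log m ≤ Real.log (m+1) := Real.log_le_log hm0 (by linarith)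
      linarith
  have h3 : 4 / Real.pi * (∑ i ∈ Finset.range m, 1 / (2 * (i:ℝ) + 1)) ≤
      4 / Real.pi * (1 / 2 * Real.log (m+1) + 0.987) := by gcongr
  have h4 : 4 / Real.pi * 0.987 ≤ 1 + Real.pi / 12 := by
    rw [div_mul_eq_mul_div, div_le_iff₀ hpi]
    nlinarith
  have h5 : 4 / Real.pi * (1 / 2 * Real.log (m+1) + 0.987) =
    2 / Real.pi * Real.log (m+1) + 4 / Real.pi * 0.987 := by ring
  linarith

lemma sum_Icc_shift (m : ℕ) (f : ℕ → ℝ) :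
    ∑ j ∈ Finset.Icc 1 m, f j = ∑ i ∈ Finset.range m, f (i + 1) := by
  rw [Finset.sum_bij' (fun i _ => i - 1) (fun i _ => i + 1)]
  · intro a ha; simp at ha ⊢; omega
  · intro a ha; simp at ha ⊢; omega
  · intro a ha; simp at ha ⊢; omega
  · intro a ha; simp at ha ⊢
  · intro a ha
    simp only [Finset.mem_Icc] at ha
    rw [Nat.sub_add_cancel ha.1]

lemma lag_node (m i : ℕ) (hi : i < m) (k : ℕ) (hk : k < m) :
    |lagBasis m (i+1) (chebNode m (k+1))| = if i = k then 1 else 0 := by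
  rw [lagBasis]
  split_ifs with h
  · subst h
    rw [Finset.prod_eq_one, abs_one]
    intro a ha
    simp only [Finset.mem_erase, Finset.mem_Icc] at ha
    apply div_self
    intro h
    have := chebNode_injOn m (x₁ := i+1) (x₂ := a) (by simp; omega) (by simp; omega)
      (sub_eq_zero.1 h)
    omega
  · rw [Finset.prod_eq_zero (i := k+1), abs_zero]
    · simp; omega
    · simp

/-- Lebesgue constant bound for the Chebyshev–Gauss nodes:
`max_{x∈[−1,1]} Σ_{j=1}^m |𝓛_j(x)| ≤ (2/π) ln(m+1) + 1`. -/
theorem lebesgue_constant_chebyshev_bound (m : ℕ) (hm : 1 ≤ m) :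
    ∀ x ∈ Set.Icc (-1 : ℝ) 1,
      ∑ j ∈ Finset.Icc 1 m, |lagBasis m j x| ≤ (2 / Real.pi) * Real.log (m + 1) + 1 := by
  intro x hx
  have hm0 : (0:ℝ) < m := by exact_mod_cast hm
  have hpi := Real.pi_pos
  rw [sum_Icc_shift]
  by_cases hn : ∃ k < m, x = chebNode m (k+1)
  · obtain ⟨k, hk, rfl⟩ := hn
    rw [Finset.sum_congr rfl (fun i hi => lag_node m i (Finset.mem_range.1 hi) k hk)]
    have : 0 ≤ Real.log (m+1) := Real.log_nonneg (by linarith)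
    have : 0 ≤ 2 / Real.pi * Real.log (m+1) := by positivity
    simp [hk]
    linarith
  obtain ⟨θ, rfl⟩ : ∃ θ, Real.cos θ = x := ⟨Real.arccos x, Real.cos_arccos hx.1 hx.2⟩
  have hθ : Real.cos (m * θ) ≠ 0 := by
    intro h
    obtain ⟨c, hc⟩ := cheb_T_eq m
    have hT := Polynomial.Chebyshev.T_real_cos θ m
    have hroot : Real.cos θ ∈ (Polynomial.Chebyshev.T ℝ m).roots := by
      rw [Polynomial.mem_roots (Polynomial.Chebyshev.T_ne_zero ℝ m), Polynomial.IsRoot.def, hT]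
      exact_mod_cast h
    rw [Polynomial.Chebyshev.roots_T_real] at hroot
    simp only [Finset.mem_val, Finset.mem_image, Finset.mem_range] at hroot
    obtain ⟨k, hk, h⟩ := hroot
    exact hn ⟨k, hk, by rw [chebNode_succ, ← h, thA]⟩
  set k : ℤ := round (m * θ / Real.pi) with hk
  set φ : ℝ := θ - k * (Real.pi / m) with hφ
  have hmφ : m * φ = m * θ - k * Real.pi := by rw [hφ]; field_simp
  have hcos : |Real.cos (m * φ)| = |Real.cos (m * θ)| := by
    rw [hmφ, Real.cos_sub_int_mul_pi, abs_mul]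
    simp
  have hcne : Real.cos (m * φ) ≠ 0 := by
    rw [← abs_pos, hcos]; exact abs_pos.2 hθ
  have hle : |φ| ≤ Real.pi / (2 * m) := by
    have := abs_sub_round (m * θ / Real.pi)
    rw [← hk] at this
    have e : φ = (m * θ / Real.pi - k) * (Real.pi / m) := by rw [hφ]; field_simp
    rw [e, abs_mul, abs_of_pos (by positivity : 0 < Real.pi / m)]
    calc _ ≤ 1 / 2 * (Real.pi / m) := by gcongr
      _ = _ := by field_simp
  have hlt : |φ| < Real.pi / (2 * m) := by
    refine lt_of_le_of_ne hle ?_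
    intro h
    apply hcne
    rw [← Real.cos_abs, abs_mul, h, abs_of_pos hm0]
    have : m * (Real.pi / (2 * m)) = Real.pi / 2 := by field_simp
    rw [this, Real.cos_pi_div_two]
  have hG : GG m φ = GG m θ := by
    have := ((GG_periodic m hm).int_mul k).sub_eq θ
    rw [← this]
  calc ∑ i ∈ Finset.range m, |lagBasis m (i+1) (Real.cos θ)|
      ≤ |Real.cos (m * θ)| / (2 * m) * GG m θ := by
        rw [GG, Finset.mul_sum]
        exact Finset.sum_le_sum fun i hi => lag_le m i (Finset.mem_range.1 hi) θ hθ
    _ = |Real.cos (m * φ)| / (2 * m) * GG m φ := by rw [hG, hcos]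
    _ = ∑ i ∈ Finset.range m, |lagBasis m (i+1) (Real.cos φ)| := by
        rw [GG, Finset.mul_sum]
        exact Finset.sum_congr rfl fun i hi => lag_eq m i (Finset.mem_range.1 hi) φ hlt
    _ ≤ ∑ i ∈ Finset.range m, |lagBasis m (i+1) 1| :=
        Finset.sum_le_sum fun i hi => lag_le_one m i (Finset.mem_range.1 hi) φ hlt
    _ ≤ _ := final_bound m hm
end
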